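/- Let m and n be positive integers with n ≥ 4 even, let 0 ≤ ℓ ≤ n−1 be an integer of the same parity as m, and let Γ = HTG(m,n,ℓ) with edge color classes R, B, Gr. Then either every automorphism of Γ that fixes setwise at least one of the sets R, B and Gr is color permuting, or mn is divisible by 4 and Γ is isomorphic to the generalized prism GPr(mn/4). -/

import Mathlib

namespace HTGPaper

/-- The honeycomb toroidal graph `HTG(m,n,ℓ)`. -/
def HTG (m n ℓ : ℕ) : SimpleGraph (ZMod m × ZMod n) :=
  SimpleGraph.fromRel (fun v w =>
    (v.1 = w.1 ∧ (w.2 = v.2 + 1 ∨ w.2 = v.2 - 1)) ∨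
    (v.1.val ≠ m - 1 ∧ w.1 = v.1 + 1 ∧ w.2 = v.2 ∧ v.1.val % 2 ≠ v.2.val % 2) ∨
    (v.1.val = m - 1 ∧ w.1 = 0 ∧ w.2 = v.2 + (ℓ : ZMod n) ∧ v.2.val % 2 = m % 2))

/-- Generators of the generalized dihedral group `G`. -/
inductive Gen | t | x | y

/-- Relators of the presentation of `G`. -/
def rels (m n ℓ : ℕ) : Set (FreeGroup Gen) :=
  {FreeGroup.of Gen.t ^ 2,
   FreeGroup.of Gen.x ^ (n / 2),
   FreeGroup.of Gen.y ^ m * (FreeGroup.of Gen.x ^ ((ℓ + m) / 2))⁻¹,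
   FreeGroup.of Gen.t * FreeGroup.of Gen.x * (FreeGroup.of Gen.t)⁻¹ * FreeGroup.of Gen.x,
   FreeGroup.of Gen.t * FreeGroup.of Gen.y * (FreeGroup.of Gen.t)⁻¹ * FreeGroup.of Gen.y,
   FreeGroup.of Gen.x * FreeGroup.of Gen.y * (FreeGroup.of Gen.x)⁻¹ * (FreeGroup.of Gen.y)⁻¹}

/-- The group `G = ⟨t,x,y | t², x^{n/2}, y^m x^{-(ℓ+m)/2}, txt⁻¹x, tyt⁻¹y, [x,y]⟩`. -/
abbrev G (m n ℓ : ℕ) : Type := PresentedGroup (rels m n ℓ)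

def gent (m n ℓ : ℕ) : G m n ℓ := PresentedGroup.of Gen.t
def genx (m n ℓ : ℕ) : G m n ℓ := PresentedGroup.of Gen.x
def geny (m n ℓ : ℕ) : G m n ℓ := PresentedGroup.of Gen.y

/-- The connection set `{t, tx, ty}`. -/
def S (m n ℓ : ℕ) : Set (G m n ℓ) :=
  {gent m n ℓ, gent m n ℓ * genx m n ℓ, gent m n ℓ * geny m n ℓ}

/-- The Cayley graph of a group with respect to a subset. -/
def cayley (H : Type*) [Group H] (T : Set H) : SimpleGraph H :=
  SimpleGraph.fromRel (fun g h => ∃ s ∈ T, h = g * s)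

/-- The Cayley graph of an additive group with respect to a subset. -/
def addCayley (H : Type*) [AddGroup H] (T : Set H) : SimpleGraph H :=
  SimpleGraph.fromRel (fun g h => ∃ s ∈ T, h = g + s)

/-- `Cay(H;T)` is a normal Cayley graph of `H` if the left regular representation `H_L`
is a normal subgroup of the automorphism group, i.e. every conjugate of a left
translation by a graph automorphism is again a left translation. -/
def IsNormalCayley (H : Type*) [Group H] (T : Set H) : Prop :=
  ∀ (f : cayley H T ≃g cayley H T) (a : H), ∃ b : H,
    ∀ g : H, f (a * f.symm g) = b * g

/-- An `s`-arc of a graph: `s+1` vertices, consecutive ones adjacent, and any three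
consecutive vertices pairwise distinct. -/
def IsSArc {V : Type*} (Γ : SimpleGraph V) (s : ℕ) (p : Fin (s + 1) → V) : Prop :=
  (∀ i : Fin s, Γ.Adj (p i.castSucc) (p i.succ)) ∧
  ∀ i j : Fin (s + 1), (i : ℕ) + 2 = (j : ℕ) → p i ≠ p j

/-- A graph is `s`-arc-transitive if its automorphism group is transitive on `s`-arcs. -/
def IsSArcTransitive {V : Type*} (Γ : SimpleGraph V) (s : ℕ) : Prop :=
  ∀ p q : Fin (s + 1) → V, IsSArc Γ s p → IsSArc Γ s q →
    ∃ f : Γ ≃g Γ, ∀ i, f (p i) = q i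

/-- A graph is `s`-arc-regular if its automorphism group is regular on `s`-arcs. -/
def IsSArcRegular {V : Type*} (Γ : SimpleGraph V) (s : ℕ) : Prop :=
  ∀ p q : Fin (s + 1) → V, IsSArc Γ s p → IsSArc Γ s q →
    ∃! f : Γ ≃g Γ, ∀ i, f (p i) = q i

/-- A graph is arc-transitive if it is `1`-arc-transitive. -/
def IsArcTransitive {V : Type*} (Γ : SimpleGraph V) : Prop :=
  IsSArcTransitive Γ 1

/-- The generalized prism `GPr(k)`. -/
def GPr (k : ℕ) : SimpleGraph (ZMod 2 × ZMod (2 * k)) :=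
  SimpleGraph.fromRel (fun v w =>
    (v.1 = w.1 ∧ (w.2 = v.2 + 1 ∨ w.2 = v.2 - 1)) ∨
    (Even v.2.val ∧ w.1 = v.1 + 1 ∧ w.2 = v.2 + 1))

/-- The cubic graph on `k` vertices given by LCF-type data `f`. -/
def lcfGraph (k : ℕ) (f : ℕ → ℤ) : SimpleGraph (ZMod k) :=
  SimpleGraph.fromRel (fun v w => w = v + 1 ∨ w = v + (f v.val : ZMod k))

/-- The cube graph `Q₃`, LCF notation `[3,-3]⁴`. -/
def cubeGraph : SimpleGraph (ZMod 8) :=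
  lcfGraph 8 (fun i => if i % 2 = 0 then 3 else -3)

/-- The Heawood graph, LCF notation `[5,-5]⁷`. -/
def heawood : SimpleGraph (ZMod 14) :=
  lcfGraph 14 (fun i => if i % 2 = 0 then 5 else -5)

/-- The Möbius–Kantor graph, LCF notation `[5,-5]⁸`. -/
def mobiusKantor : SimpleGraph (ZMod 16) :=
  lcfGraph 16 (fun i => if i % 2 = 0 then 5 else -5)

/-- The Pappus graph, LCF notation `[5,7,-7,7,-7,-5]³`. -/
def pappus : SimpleGraph (ZMod 18) :=
  lcfGraph 18 (fun i =>
    match i % 6 with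
    | 0 => 5 | 1 => 7 | 2 => -7 | 3 => 7 | 4 => -7 | _ => -5)

/-- The red edges of `HTG(m,n,ℓ) = Cay(G;{t,tx,ty})`. -/
def Red (m n ℓ : ℕ) : Set (Sym2 (G m n ℓ)) :=
  {e | ∃ g : G m n ℓ, e = s(g, g * gent m n ℓ)}

/-- The blue edges. -/
def Blue (m n ℓ : ℕ) : Set (Sym2 (G m n ℓ)) :=
  {e | ∃ g : G m n ℓ, e = s(g, g * (gent m n ℓ * genx m n ℓ))}

/-- The green edges. -/
def Green (m n ℓ : ℕ) : Set (Sym2 (G m n ℓ)) :=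
  {e | ∃ g : G m n ℓ, e = s(g, g * (gent m n ℓ * geny m n ℓ))}

/-- The three color classes. -/
def colorClasses (m n ℓ : ℕ) : Set (Set (Sym2 (G m n ℓ))) :=
  {Red m n ℓ, Blue m n ℓ, Green m n ℓ}

/-- An automorphism of `Cay(G;{t,tx,ty})` is color permuting if it preserves the
partition of the edges into the three color classes. -/
def IsColorPermuting {m n ℓ : ℕ}
    (f : cayley (G m n ℓ) (S m n ℓ) ≃g cayley (G m n ℓ) (S m n ℓ)) : Prop :=
  ∀ C ∈ colorClasses m n ℓ, Sym2.map ⇑f '' C ∈ colorClasses m n ℓ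

/-- The group `Aut(H;T)` of automorphisms of `H` fixing `T` setwise. -/
def autFixing (H : Type*) [Group H] (T : Set H) : Subgroup (MulAut H) where
  carrier := {φ | ⇑φ '' T = T}
  one_mem' := by
    show ⇑(1 : MulAut H) '' T = T
    simp
  mul_mem' := by
    intro a b ha hb
    show ⇑(a * b) '' T = T
    have h : ⇑(a * b) = ⇑a ∘ ⇑b := rfl
    rw [h, Set.image_comp]
    rw [show ⇑b '' T = T from hb, show ⇑a '' T = T from ha]
  inv_mem' := by
    intro a ha
    show ⇑a⁻¹ '' T = T
    conv_lhs => rw [← show ⇑a '' T = T from ha]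
    rw [← Set.image_comp]
    have h : ⇑a⁻¹ ∘ ⇑a = id := by
      funext g
      simp
    rw [h, Set.image_id]


section Abstract

variable {H : Type*} [Group H]

/-- The color class of edges `{g, g s}`. -/
def cls (s : H) : Set (Sym2 H) := {e | ∃ g : H, e = s(g, g * s)}

theorem cls_fix {f : H → H} {a : H} (ha : a * a = 1)
    (h : Sym2.map f '' cls a = cls a) (g : H) : f (g * a) = f g * a := by
  have h1 : Sym2.map f s(g, g * a) ∈ cls a := by
    rw [← h]; exact ⟨_, ⟨g, rfl⟩, rfl⟩
  obtain ⟨k, hk⟩ := h1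
  rw [Sym2.map_mk, Sym2.eq_iff] at hk
  rcases hk with ⟨h1, h2⟩ | ⟨h1, h2⟩
  · rw [h1, h2]
  · rw [h1, h2, mul_assoc, ha, mul_one]

theorem cls_image {f : H → H} (hf : Function.Surjective f) {a b : H}
    (h : ∀ g, f (g * a) = f g * b) : Sym2.map f '' cls a = cls b := by
  ext e
  constructor
  · rintro ⟨_, ⟨g, rfl⟩, rfl⟩
    exact ⟨f g, by rw [Sym2.map_mk, h]⟩
  · rintro ⟨k, rfl⟩
    obtain ⟨g, rfl⟩ := hf k
    exact ⟨_, ⟨g, rfl⟩, by rw [Sym2.map_mk, h]⟩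

theorem cayley_adj_iff {a b c : H} (ha : a * a = 1) (hb : b * b = 1) (hc : c * c = 1)
    {T : Set H} (hT : T = {a, b, c}) (g h : H) :
    (cayley H T).Adj g h ↔ g ≠ h ∧ (h = g * a ∨ h = g * b ∨ h = g * c) := by
  have key : ∀ s : H, s * s = 1 → ∀ u v : H, u = v * s → v = u * s := by
    intro s hs u v huv
    rw [huv, mul_assoc, hs, mul_one]
  subst hT
  simp only [cayley, SimpleGraph.fromRel_adj, Set.mem_insert_iff, Set.mem_singleton_iff,
    exists_eq_or_imp, exists_eq_left]
  constructor
  · rintro ⟨h1, h2 | h2⟩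
    · exact ⟨h1, h2⟩
    · refine ⟨h1, ?_⟩
      rcases h2 with h2 | h2 | h2
      · exact Or.inl (key _ ha _ _ h2)
      · exact Or.inr (Or.inl (key _ hb _ _ h2))
      · exact Or.inr (Or.inr (key _ hc _ _ h2))
  · rintro ⟨h1, h2⟩
    exact ⟨h1, Or.inl h2⟩

/-- A subset of a group that is invariant under the generators is everything. -/
theorem gen_induction {a b c : H} (ha : a * a = 1) (hb : b * b = 1) (hc : c * c = 1)
    (hgen : Subgroup.closure {a, b, c} = ⊤) (P : H → Prop) (h1 : P 1)
    (pa : ∀ g, P g → P (g * a)) (pb : ∀ g, P g → P (g * b)) (pc : ∀ g, P g → P (g * c))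
    (g : H) : P g := by
  have hg : g ∈ Subgroup.closure {a, b, c} := by rw [hgen]; trivial
  induction hg using Subgroup.closure_induction_right with
  | one => exact h1
  | mul_right x y hy hx ih =>
    rcases hx with rfl | rfl | rfl
    · exact pa _ ih
    · exact pb _ ih
    · exact pc _ ih
  | mul_inv_cancel x y hy hx ih =>
    rcases hx with rfl | rfl | rfl
    · rw [inv_eq_of_mul_eq_one_left ha]; exact pa _ ih
    · rw [inv_eq_of_mul_eq_one_left hb]; exact pb _ ih
    · rw [inv_eq_of_mul_eq_one_left hc]; exact pc _ ih

theorem fix_or_swap {a b c : H} (ha : a * a = 1) (hb : b * b = 1) (hc : c * c = 1)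
    (habc : a * b * c * a * b * c = 1)
    (hgen : Subgroup.closure {a, b, c} = ⊤)
    (h2 : b ≠ 1) (h3 : c ≠ 1)
    (hbc : b * c = c * b → b = c)
    {T : Set H} (hT : T = {a, b, c}) (f : cayley H T ≃g cayley H T) (hf : ∀ g, f (g * a) = f g * a) :
    (∀ g, f (g * b) = f g * b ∧ f (g * c) = f g * c) ∨
    (∀ g, f (g * b) = f g * c ∧ f (g * c) = f g * b) := by
  have hne : ∀ g s : H, s ≠ 1 → g ≠ g * s := by
    intro g s hs h; exact hs (by simpa using h.symm)
  have adjb : ∀ g, f (g * b) = f g * a ∨ f (g * b) = f g * b ∨ f (g * b) = f g * c := by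
    intro g
    have : (cayley H T).Adj (f g) (f (g * b)) := by
      rw [f.map_adj_iff, cayley_adj_iff ha hb hc hT]
      exact ⟨hne _ _ h2, by simp⟩
    exact ((cayley_adj_iff ha hb hc hT _ _).1 this).2
  have adjc : ∀ g, f (g * c) = f g * a ∨ f (g * c) = f g * b ∨ f (g * c) = f g * c := by
    intro g
    have : (cayley H T).Adj (f g) (f (g * c)) := by
      rw [f.map_adj_iff, cayley_adj_iff ha hb hc hT]
      exact ⟨hne _ _ h3, by simp⟩
    exact ((cayley_adj_iff ha hb hc hT _ _).1 this).2
  have inj : ∀ g s u : H, f (g * s) = f (g * u) → s = u := by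
    intro g s u h; exact mul_left_cancel (f.injective h)
  have fa_b : ∀ g, f (g * b) = f g * a → b = a := by
    intro g h; exact inj g b a (by rw [h, hf])
  have fa_c : ∀ g, f (g * c) = f g * a → c = a := by
    intro g h; exact inj g c a (by rw [h, hf])
  -- pointwise dichotomy
  have dich : ∀ g, (f (g * b) = f g * b ∧ f (g * c) = f g * c) ∨
      (f (g * b) = f g * c ∧ f (g * c) = f g * b ∧ b ≠ c) := by
    intro g
    have ib := inj g b c
    rcases eq_or_ne b a with hba | hba
    · have e1 : f (g * b) = f g * b := by rw [hba, hf]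
      refine Or.inl ⟨e1, ?_⟩
      rcases adjc g with h | h | h
      · have := fa_c g h; rw [this, hf]
      · have := fa_c g (by rw [h, hba]); rw [this, hf]
      · exact h
    rcases eq_or_ne c a with hca | hca
    · have e1 : f (g * c) = f g * c := by rw [hca, hf]
      refine Or.inl ⟨?_, e1⟩
      rcases adjb g with h | h | h
      · have := fa_b g h; rw [this, hf]
      · exact h
      · have := fa_b g (by rw [h, hca]); rw [this, hf]
    rcases eq_or_ne b c with hbc' | hbc'
    · subst hbc'
      rcases adjb g with h | h | h
      · exact absurd (fa_b g h) hba
      · exact Or.inl ⟨h, h⟩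
      · exact Or.inl ⟨h, h⟩
    rcases adjb g with h | h | h
    · exact absurd (fa_b g h) hba
    · rcases adjc g with h' | h' | h'
      · exact absurd (fa_c g h') hca
      · exact absurd (ib (by rw [h, h'])) hbc'
      · exact Or.inl ⟨h, h'⟩
    · rcases adjc g with h' | h' | h'
      · exact absurd (fa_c g h') hca
      · exact Or.inr ⟨h, h', hbc'⟩
      · exact absurd (ib (by rw [h, h'])) hbc'
  by_cases hb_eq : b = c
  · left
    intro g
    rcases dich g with h | h
    · exact h
    · exact absurd hb_eq h.2.2
  have ebb : ∀ g, g * b * b = g := fun g => by rw [mul_assoc, hb, mul_one]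
  have ecc : ∀ g, g * c * c = g := fun g => by rw [mul_assoc, hc, mul_one]
  have eaa : ∀ g, g * a * a = g := fun g => by rw [mul_assoc, ha, mul_one]
  let P : H → Prop := fun g => f (g * b) = f g * b
  have Pb : ∀ g, P g → P (g * b) := by
    intro g h
    show f (g * b * b) = f (g * b) * b
    rw [ebb, show f (g * b) = f g * b from h, ebb]
  have Pc' : ∀ g, P g → f (g * c) = f g * c := by
    intro g h
    rcases dich g with h' | h'
    · exact h'.2
    · exact absurd (mul_left_cancel ((show f (g * b) = f g * b from h).symm.trans h'.1)) hb_eq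
  have Pc : ∀ g, P g → P (g * c) := by
    intro g h
    have h5 := Pc' g h
    rcases dich (g * c) with h' | h'
    · exact h'.1
    · exfalso
      have h6 := h'.2.1
      rw [ecc, h5] at h6
      exact hb_eq (mul_left_cancel (a := f g * c) (by rw [← h6, ecc]))
  have hN : ∀ g, ¬ P g → f (g * b) = f g * c ∧ f (g * c) = f g * b := by
    intro g h
    rcases dich g with h' | h'
    · exact absurd h'.1 h
    · exact ⟨h'.1, h'.2.1⟩
  have e1 : a * b * c * a = c * b := by
    have : a * b * c * a * (b * c) = 1 := by rw [← habc]; group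
    rw [eq_inv_of_mul_eq_one_left this, mul_inv_rev, inv_eq_of_mul_eq_one_left hb,
      inv_eq_of_mul_eq_one_left hc]
  have e2 : a * c * b * a = b * c := by
    have := congrArg (·⁻¹) e1
    simp only [mul_inv_rev, inv_eq_of_mul_eq_one_left ha, inv_eq_of_mul_eq_one_left hb,
      inv_eq_of_mul_eq_one_left hc] at this
    rw [← this]; group
  have Pa : ∀ g, P g → P (g * a) := by
    intro g h
    by_contra hn
    have hnb : ¬ P (g * a * b) := fun h' => hn (by have := Pb _ h'; rwa [ebb] at this)
    have s1 := (hN _ hn).1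
    have s2 := (hN _ hnb).2
    have s3 := hf (g * a * b * c)
    rw [s2, s1, hf g] at s3
    have s4 : f (g * c * b) = f (g * c) * b := Pc g h
    rw [Pc' g h] at s4
    have s5 : g * a * b * c * a = g * c * b := by
      rw [mul_assoc g c b, ← e1]; group
    rw [s5, s4] at s3
    have s6 : f g * (c * b) = f g * (a * c * b * a) := by
      rw [← mul_assoc, s3]; group
    have s7 := mul_left_cancel s6
    rw [e2] at s7
    exact hb_eq (hbc s7.symm)
  have Pinv : ∀ g, P g ↔ P 1 := by
    apply gen_induction ha hb hc hgen (fun g => P g ↔ P 1) Iff.rfl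
    · intro g h
      rw [← h]
      exact ⟨fun h => by have := Pa _ h; rwa [eaa] at this, Pa g⟩
    · intro g h
      rw [← h]
      exact ⟨fun h => by have := Pb _ h; rwa [ebb] at this, Pb g⟩
    · intro g h
      rw [← h]
      exact ⟨fun h => by have := Pc _ h; rwa [ecc] at this, Pc g⟩
  by_cases hP : P 1
  · left
    intro g
    have := (Pinv g).2 hP
    exact ⟨this, Pc' g this⟩
  · right
    intro g
    exact hN g (fun h => hP ((Pinv g).1 h))

theorem perm_of_fix {a b c : H} (ha : a * a = 1) (hb : b * b = 1) (hc : c * c = 1)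
    (habc : a * b * c * a * b * c = 1)
    (hgen : Subgroup.closure {a, b, c} = ⊤)
    (h2 : b ≠ 1) (h3 : c ≠ 1)
    (hbc : b * c = c * b → b = c)
    {T : Set H} (hT : T = {a, b, c}) (f : cayley H T ≃g cayley H T) (hf : Sym2.map f '' cls a = cls a)
    (C : Set (Sym2 H)) (hC : C = cls a ∨ C = cls b ∨ C = cls c) :
    Sym2.map f '' C = cls a ∨ Sym2.map f '' C = cls b ∨ Sym2.map f '' C = cls c := by
  rcases fix_or_swap ha hb hc habc hgen h2 h3 hbc hT f (cls_fix ha hf) with h | h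
  · rcases hC with rfl | rfl | rfl
    · exact Or.inl hf
    · exact Or.inr (Or.inl (cls_image f.surjective fun g => (h g).1))
    · exact Or.inr (Or.inr (cls_image f.surjective fun g => (h g).2))
  · rcases hC with rfl | rfl | rfl
    · exact Or.inl hf
    · exact Or.inr (Or.inr (cls_image f.surjective fun g => (h g).1))
    · exact Or.inr (Or.inl (cls_image f.surjective fun g => (h g).2))

end Abstract

section Prism

theorem val_succ {K : ℕ} [NeZero (2 * K)] (j : ZMod (2 * K)) :
    (j + 1).val = (j.val + 1) % (2 * K) := by
  have : j + 1 = ((j.val + 1 : ℕ) : ZMod (2 * K)) := by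
    push_cast; rw [ZMod.natCast_zmod_val]
  rw [this, ZMod.val_natCast]

theorem val_pred {K : ℕ} [NeZero (2 * K)] (j : ZMod (2 * K)) :
    (j - 1).val = (j.val + (2 * K - 1)) % (2 * K) := by
  have hK : 2 * K ≠ 0 := NeZero.ne _
  have : j - 1 = ((j.val + (2 * K - 1) : ℕ) : ZMod (2 * K)) := by
    rw [Nat.cast_add, Nat.cast_sub (by omega), ZMod.natCast_zmod_val, ZMod.natCast_self]
    push_cast; ring
  rw [this, ZMod.val_natCast]

theorem par_succ {K : ℕ} [NeZero (2 * K)] (j : ZMod (2 * K)) :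
    (j + 1).val % 2 ≠ j.val % 2 := by
  rw [val_succ, Nat.mod_mul_right_mod]; omega

theorem par_pred {K : ℕ} [NeZero (2 * K)] (j : ZMod (2 * K)) :
    (j - 1).val % 2 ≠ j.val % 2 := by
  have := par_succ (j - 1)
  rw [sub_add_cancel] at this
  exact this.symm

theorem GPr_par {K : ℕ} [NeZero (2 * K)] {v w : ZMod 2 × ZMod (2 * K)} (h : (GPr K).Adj v w) :
    v.2.val % 2 ≠ w.2.val % 2 := by
  have h1 := par_succ v.2
  have h2 := par_pred v.2
  have h3 := par_succ w.2
  have h4 := par_pred w.2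
  simp only [GPr, SimpleGraph.fromRel_adj] at h
  rcases h.2 with (⟨_, h | h⟩ | ⟨_, _, h⟩) | (⟨_, h | h⟩ | ⟨_, _, h⟩) <;> rw [h]
  all_goals first | assumption | (apply Ne.symm; assumption)

theorem GPr_even {K : ℕ} [NeZero (2 * K)] {v w : ZMod 2 × ZMod (2 * K)} (hv : v.2.val % 2 = 0)
    (hw : w.2.val % 2 = 1) : (GPr K).Adj v w ↔
      w = (v.1, v.2 - 1) ∨ w = (v.1, v.2 + 1) ∨ w = (v.1 + 1, v.2 + 1) := by
  obtain ⟨i, j⟩ := v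
  obtain ⟨i', j'⟩ := w
  simp only at hv hw
  have h1 : ¬ Even j'.val := by rw [Nat.not_even_iff]; exact hw
  have h2 : Even j.val := by rw [Nat.even_iff]; exact hv
  have h3 : (i, j) ≠ (i', j') := by
    intro h
    rw [Prod.mk.injEq] at h
    rw [h.2] at hv
    omega
  simp only [GPr, SimpleGraph.fromRel_adj, h1, h2, h3, Prod.mk.injEq, ne_eq, not_false_eq_true,
    true_and, false_and, or_false]
  constructor
  · rintro ((⟨rfl, h | h⟩ | ⟨h, h'⟩) | ⟨rfl, h | h⟩)
    · simp [h]
    · simp [h]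
    · simp [h, h']
    · left; simp [h]
    · right; left; simp [h]
  · rintro (⟨rfl, h⟩ | ⟨rfl, h⟩ | ⟨h, h'⟩)
    · simp [h]
    · simp [h]
    · simp [h, h']

variable {H : Type*} [Group H]

/-- Powers of `z` indexed by `ZMod 2`. -/
def zz (z : H) (i : ZMod 2) : H := if i = 0 then 1 else z

theorem zz_succ {z : H} (hz : z * z = 1) (i : ZMod 2) : zz z (i + 1) = zz z i * z := by
  have h2 : i = 0 ∨ i = 1 := by revert i; decide
  have h3 : (1 : ZMod 2) + 1 = 0 := by decide
  have h4 : (1 : ZMod 2) ≠ 0 := by decide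
  rcases h2 with rfl | rfl
  · rw [zero_add]; unfold zz; rw [if_neg h4, if_pos rfl, one_mul]
  · rw [h3]; unfold zz; rw [if_neg h4, if_pos rfl, hz]

theorem zz_comm {z : H} (hz : ∀ g, g * z = z * g) (i : ZMod 2) (g : H) :
    g * zz z i = zz z i * g := by
  unfold zz
  split_ifs
  · simp
  · exact hz g

/-- Vertex map from the generalized prism. -/
def phi (K : ℕ) (a x z : H) (v : ZMod 2 × ZMod (2 * K)) : H :=
  if v.2.val % 2 = 0 then x ^ (-((v.2.val / 2 : ℕ) : ℤ)) * zz z v.1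
  else a * x ^ ((((v.2.val + 1) / 2) % K : ℕ) : ℤ) * zz z v.1

theorem conj_zpow' {a x : H} (h : x * a = a * x⁻¹) (k : ℤ) : x ^ k * a = a * x ^ (-k) := by
  have h1 : SemiconjBy a x⁻¹ x := h.symm
  have h2 : SemiconjBy a (x⁻¹ ^ k) (x ^ k) := h1.zpow_right k
  rw [← h2.eq, inv_zpow, zpow_neg]

set_option maxHeartbeats 1000000 in
theorem prism_iso {a b c : H} (ha : a * a = 1) (hb : b * b = 1) (hc : c * c = 1)
    (habc : a * b * c * a * b * c = 1)
    (hgen : Subgroup.closure {a, b, c} = ⊤)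
    (ε : H →* ℤˣ) (ea : ε a = -1) (eb : ε b = -1) (ec : ε c = -1)
    (hbc : b * c = c * b) (hne : b ≠ c)
    {N : ℕ} (hN : 0 < N) (hcard : Nat.card H = N)
    {T : Set H} (hT : T = {a, b, c}) :
    4 ∣ N ∧ Nonempty (cayley H T ≃g GPr (N / 4)) := by
  have hfin : Finite H := Nat.finite_of_card_ne_zero (by omega)
  have e1 : a * b * c * a = c * b := by
    have : a * b * c * a * (b * c) = 1 := by rw [← habc]; group
    rw [eq_inv_of_mul_eq_one_left this, mul_inv_rev, inv_eq_of_mul_eq_one_left hb,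
      inv_eq_of_mul_eq_one_left hc]
  obtain ⟨x, hx⟩ : ∃ x, x = a * b := ⟨_, rfl⟩
  obtain ⟨z, hz⟩ : ∃ z, z = b * c := ⟨_, rfl⟩
  have zz1 : z * z = 1 := by
    rw [hz]; nth_rw 2 [hbc]
    calc b * c * (c * b) = b * (c * c) * b := by group
      _ = 1 := by rw [hc, mul_one, hb]
  have z1 : z ≠ 1 := by
    intro h
    rw [hz] at h
    apply hne
    rw [eq_inv_of_mul_eq_one_left h, inv_eq_of_mul_eq_one_left hc]
  have za : a * z = z * a := by
    have : a * z * a = z := by rw [hz, ← mul_assoc, e1, hbc]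
    calc a * z = a * z * (a * a) := by rw [ha, mul_one]
      _ = a * z * a * a := by group
      _ = z * a := by rw [this]
  have zb : b * z = z * b := by rw [hz, mul_assoc, ← hbc]
  have zc : c * z = z * c := by rw [hz]; nth_rw 1 [hbc]; rw [hbc]; simp only [mul_assoc]; rw [← hbc]
  have zcent : ∀ g, g * z = z * g := by
    apply gen_induction ha hb hc hgen
    · simp
    · intro g h; rw [mul_assoc, za, ← mul_assoc, h, mul_assoc]
    · intro g h; rw [mul_assoc, zb, ← mul_assoc, h, mul_assoc]
    · intro g h; rw [mul_assoc, zc, ← mul_assoc, h, mul_assoc]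
  have bx : b = a * x := by rw [hx, ← mul_assoc, ha, one_mul]
  have cx : c = a * x * z := by rw [← bx, hz, ← mul_assoc, hb, one_mul]
  have xa : x * a = a * x⁻¹ := by
    rw [hx, mul_inv_rev, inv_eq_of_mul_eq_one_left ha, inv_eq_of_mul_eq_one_left hb]; group
  have xka := conj_zpow' xa
  -- counting
  let Z := Subgroup.zpowers z
  have hnorm : Z.Normal := by
    refine ⟨fun n hn g => ?_⟩
    obtain ⟨k, rfl⟩ := hn
    have : Commute g (z ^ k) := (show Commute g z from zcent g).zpow_right k
    refine ⟨k, ?_⟩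
    show z ^ k = g * z ^ k * g⁻¹
    rw [this.eq, mul_inv_cancel_right]
  have hordz : orderOf z = 2 := orderOf_eq_prime (by rw [pow_two, zz1]) z1
  have hZcard : Nat.card Z = 2 := by rw [Nat.card_zpowers, hordz]
  have hZ : ∀ g ∈ Z, g = 1 ∨ g = z := by
    rintro _ ⟨k, rfl⟩
    show z ^ k = 1 ∨ z ^ k = z
    rcases Int.even_or_odd' k with ⟨u, rfl | rfl⟩
    · left; rw [zpow_mul, zpow_two, zz1, one_zpow]
    · right; rw [zpow_add, zpow_mul, zpow_two, zz1, one_zpow]; simp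
  have hkerindex : ε.ker.index = 2 := by
    rw [Subgroup.index_ker]
    have : ε.range = ⊤ := by
      rw [eq_top_iff]
      rintro u -
      rcases Int.units_eq_one_or u with rfl | rfl
      · exact ⟨1, map_one _⟩
      · exact ⟨a, ea⟩
    rw [this]
    simp
  have hZker : Z ≤ ε.ker := by
    rw [Subgroup.zpowers_le, MonoidHom.mem_ker, hz, map_mul, eb, ec]; simp
  have hidx := Subgroup.relIndex_mul_index hZker
  have hidx2 := Z.card_mul_index
  rw [hZcard, hcard, ← hidx, hkerindex] at hidx2
  obtain ⟨K, hK⟩ : ∃ K, K = Z.relIndex ε.ker := ⟨_, rfl⟩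
  rw [← hK] at hidx2
  have hN4 : N = 4 * K := by omega
  have hxK : x ^ K ∈ Z := by
    have hxk : x ∈ ε.ker := by rw [MonoidHom.mem_ker, hx, map_mul, ea, eb]; simp
    have hnn : (Z.subgroupOf ε.ker).Normal := inferInstance
    have := Subgroup.pow_index_mem (Z.subgroupOf ε.ker) (⟨x, hxk⟩ : ε.ker)
    rw [Subgroup.mem_subgroupOf] at this
    rw [hK]
    exact this
  have hKpos : 0 < K := by omega
  refine ⟨⟨K, hN4⟩, ?_⟩
  rw [show N / 4 = K by omega]
  have : NeZero (2 * K) := ⟨by omega⟩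
  have zs := zz_succ zz1
  have zzc := zz_comm zcent
  -- reduction modulo K
  have red : ∀ k k' : ℤ, (K : ℤ) ∣ k - k' → x ^ k = x ^ k' ∨ x ^ k = x ^ k' * z := by
    rintro k k' ⟨q, hq⟩
    have h1 : x ^ ((K : ℤ) * q) ∈ Z := by
      rw [zpow_mul, zpow_natCast]; exact Z.zpow_mem hxK q
    have h2 : x ^ k = x ^ k' * x ^ ((K : ℤ) * q) := by rw [← zpow_add]; congr 1; omega
    rcases hZ _ h1 with h | h
    · left; rw [h2, h, mul_one]
    · right; rw [h2, h]
  have red2 : ∀ k k' : ℤ, (K : ℤ) ∣ k - k' → ∀ i, ∃ i', x ^ k * zz z i = x ^ k' * zz z i' := by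
    intro k k' h i
    rcases red k k' h with h | h
    · exact ⟨i, by rw [h]⟩
    · exact ⟨i + 1, by rw [h, zs, mul_assoc, zzc]⟩
  have form : ∀ h : H, ∃ (k : ℤ) (i : ZMod 2), h = x ^ k * zz z i ∨ h = a * (x ^ k * zz z i) := by
    have aux : ∀ (k : ℤ) (i : ZMod 2), x ^ k * zz z i * a = a * (x ^ (-k) * zz z i) := by
      intro k i
      rw [mul_assoc, ← zzc, ← mul_assoc, xka, mul_assoc]
    have aux1 : ∀ (k : ℤ) (i : ZMod 2), x ^ k * zz z i * x = x ^ (k + 1) * zz z i := by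
      intro k i
      rw [mul_assoc, ← zzc, zpow_add_one, mul_assoc]
    have aux2 : ∀ (k : ℤ) (i : ZMod 2), x ^ k * zz z i * z = x ^ k * zz z (i + 1) := by
      intro k i
      rw [zs, mul_assoc]
    apply gen_induction ha hb hc hgen
    · exact ⟨0, 0, by simp [zz]⟩
    · rintro _ ⟨k, i, rfl | rfl⟩
      · exact ⟨-k, i, Or.inr (aux k i)⟩
      · refine ⟨-k, i, Or.inl ?_⟩
        rw [mul_assoc a, aux, ← mul_assoc, ha, one_mul]
    · rintro _ ⟨k, i, rfl | rfl⟩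
      · refine ⟨-k + 1, i, Or.inr ?_⟩
        rw [bx, ← mul_assoc, aux, mul_assoc a, aux1]
      · refine ⟨-k + 1, i, Or.inl ?_⟩
        rw [bx, ← mul_assoc, mul_assoc a, aux, ← mul_assoc, ha, one_mul, aux1]
    · rintro _ ⟨k, i, rfl | rfl⟩
      · refine ⟨-k + 1, i + 1, Or.inr ?_⟩
        rw [cx, ← mul_assoc, ← mul_assoc, aux, mul_assoc a, aux1, mul_assoc a, aux2]
      · refine ⟨-k + 1, i + 1, Or.inl ?_⟩
        rw [cx, ← mul_assoc, ← mul_assoc, mul_assoc a, aux, ← mul_assoc a a, ha, one_mul, aux1, aux2]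
  have hsurj : Function.Surjective (phi K a x z) := by
    intro h
    have hmod : ∀ k : ℤ, ∃ r : ℕ, r < K ∧ (K : ℤ) ∣ k - r := by
      intro k
      have h0 := Int.emod_nonneg k (b := (K : ℤ)) (by omega)
      have h1 := Int.emod_lt_of_pos k (b := (K : ℤ)) (by omega)
      refine ⟨(k % K).toNat, by omega, ?_⟩
      rw [Int.toNat_of_nonneg h0]
      exact Int.dvd_self_sub_emod
    obtain ⟨k, i, rfl | rfl⟩ := form h
    · obtain ⟨r, hr, hd⟩ := hmod (-k)
      obtain ⟨i', hi'⟩ := red2 k (-r) (by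
        have := (dvd_neg (α := ℤ)).2 hd
        rwa [neg_sub', neg_neg] at this) i
      refine ⟨(i', ((2 * r : ℕ) : ZMod (2 * K))), ?_⟩
      have hv : ((2 * r : ℕ) : ZMod (2 * K)).val = 2 * r := ZMod.val_natCast_of_lt (by omega)
      unfold phi
      simp only [hv]
      rw [if_pos (by omega), hi', show 2 * r / 2 = r by omega]
    · obtain ⟨r, hr, hd⟩ := hmod k
      obtain ⟨i', hi'⟩ := red2 k r hd i
      obtain ⟨v, hv1, hv2, hv3⟩ : ∃ v, v < 2 * K ∧ v % 2 = 1 ∧ ((v + 1) / 2) % K = r := by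
        rcases Nat.eq_zero_or_pos r with h | h
        · refine ⟨2 * K - 1, by omega, by omega, ?_⟩
          rw [show (2 * K - 1 + 1) / 2 = K by omega, Nat.mod_self, h]
        · refine ⟨2 * r - 1, by omega, by omega, ?_⟩
          rw [show (2 * r - 1 + 1) / 2 = r by omega, Nat.mod_eq_of_lt hr]
      refine ⟨(i', (v : ZMod (2 * K))), ?_⟩
      have hv : (v : ZMod (2 * K)).val = v := ZMod.val_natCast_of_lt (by omega)
      unfold phi
      simp only [hv]
      rw [if_neg (by omega), hi', hv3, mul_assoc]
  have hbij : Function.Bijective (phi K a x z) := by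
    rw [Nat.bijective_iff_surjective_and_card]
    refine ⟨hsurj, ?_⟩
    rw [hcard, Nat.card_prod, Nat.card_zmod, Nat.card_zmod]; omega
  have nb_a : ∀ i (j : ZMod (2 * K)), j.val % 2 = 0 →
      phi K a x z (i, j - 1) = phi K a x z (i, j) * a := by
    intro i j hj
    have h1 := par_pred j
    have h2 := val_pred j
    have h3 := j.val_lt
    unfold phi
    simp only
    rw [if_neg (by omega), if_pos hj, mul_assoc, mul_assoc, ← zzc, ← mul_assoc, ← mul_assoc, xka,
      neg_neg]
    congr 4
    rcases Nat.eq_zero_or_pos j.val with h | h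
    · rw [h, Nat.zero_add, Nat.mod_eq_of_lt (by omega)] at h2
      rw [h2, h, show (2 * K - 1 + 1) / 2 = K by omega, Nat.mod_self]
    · rw [show j.val + (2 * K - 1) = (j.val - 1) + 2 * K by omega, Nat.add_mod_right,
        Nat.mod_eq_of_lt (by omega)] at h2
      rw [h2, show (j.val - 1 + 1) / 2 = j.val / 2 by omega, Nat.mod_eq_of_lt (by omega)]
  have nb_bc : ∀ i (j : ZMod (2 * K)), j.val % 2 = 0 →
      (phi K a x z (i, j + 1) = phi K a x z (i, j) * b ∧
        phi K a x z (i + 1, j + 1) = phi K a x z (i, j) * c) ∨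
      (phi K a x z (i, j + 1) = phi K a x z (i, j) * c ∧
        phi K a x z (i + 1, j + 1) = phi K a x z (i, j) * b) := by
    intro i j hj
    have h1 := par_succ j
    have h2 := val_succ j
    have h3 := j.val_lt
    rw [Nat.mod_eq_of_lt (by omega)] at h2
    have hB : phi K a x z (i, j) * b = a * x ^ ((j.val / 2 : ℕ) + 1 : ℤ) * zz z i := by
      unfold phi
      simp only
      rw [if_pos hj, mul_assoc, ← zzc, bx, ← mul_assoc, ← mul_assoc, xka, neg_neg, zpow_add_one]
      simp only [mul_assoc]
    have hC : phi K a x z (i, j) * c = phi K a x z (i, j) * b * z := by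
      rw [cx, bx]; simp only [mul_assoc]
    rw [hC, hB]
    have hdiv : (K : ℤ) ∣ ((((j.val + 1 + 1) / 2) % K : ℕ) : ℤ) - ((j.val / 2 : ℕ) + 1 : ℤ) := by
      rw [show (j.val + 1 + 1) / 2 = j.val / 2 + 1 by omega]
      push_cast
      rw [← dvd_neg, neg_sub]
      exact Int.dvd_self_sub_emod
    unfold phi
    simp only
    rw [if_neg (by omega), if_neg (by omega), h2, zs]
    rcases red _ _ hdiv with h | h
    · left
      rw [h]
      exact ⟨rfl, by simp only [mul_assoc]⟩
    · right
      rw [h]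
      refine ⟨?_, ?_⟩
      · simp only [mul_assoc]; rw [zzc]
      · simp only [mul_assoc]; rw [← zzc i z, ← mul_assoc z, zz1, one_mul]
  have epsx : ε x = 1 := by rw [hx, map_mul, ea, eb]; simp
  have epsz : ∀ i, ε (zz z i) = 1 := by
    intro i; unfold zz; split_ifs
    · simp
    · rw [hz, map_mul, eb, ec]; simp
  have eps0 : ∀ v : ZMod 2 × ZMod (2 * K), v.2.val % 2 = 0 → ε (phi K a x z v) = 1 := by
    intro v hv; unfold phi; rw [if_pos hv]; simp [epsx, epsz]
  have eps1 : ∀ v : ZMod 2 × ZMod (2 * K), v.2.val % 2 = 1 → ε (phi K a x z v) = -1 := by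
    intro v hv; unfold phi; rw [if_neg (by omega)]; simp [epsx, epsz, ea]
  have cay_eps : ∀ g h, (cayley H T).Adj g h → ε g ≠ ε h := by
    intro g h hgh
    rcases ((cayley_adj_iff ha hb hc hT g h).1 hgh).2 with h | h | h <;>
    · rw [h, map_mul]
      simp only [ea, eb, ec]
      rcases Int.units_eq_one_or (ε g) with h | h <;> rw [h] <;> decide
  have key : ∀ v w : ZMod 2 × ZMod (2 * K), v.2.val % 2 = 0 → w.2.val % 2 = 1 →
      ((cayley H T).Adj (phi K a x z v) (phi K a x z w) ↔ (GPr K).Adj v w) := by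
    intro v w hv hw
    rw [cayley_adj_iff ha hb hc hT, GPr_even hv hw]
    have hne' : phi K a x z v ≠ phi K a x z w := by
      intro h
      have h1 := eps0 v hv
      rw [h, eps1 w hw] at h1
      exact absurd h1 (by decide)
    have i1 : w = (v.1, v.2 - 1) ↔ phi K a x z w = phi K a x z v * a := by
      rw [← nb_a v.1 v.2 hv, hbij.1.eq_iff]
    have i2 : w = (v.1, v.2 + 1) ↔ phi K a x z w = phi K a x z (v.1, v.2 + 1) := by
      rw [hbij.1.eq_iff]
    have i3 : w = (v.1 + 1, v.2 + 1) ↔ phi K a x z w = phi K a x z (v.1 + 1, v.2 + 1) := by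
      rw [hbij.1.eq_iff]
    rw [i1, i2, i3]
    rcases nb_bc v.1 v.2 hv with ⟨h, h'⟩ | ⟨h, h'⟩
    · rw [h, h']; exact and_iff_right hne'
    · rw [h, h', or_comm (a := phi K a x z w = phi K a x z v * c)]; exact and_iff_right hne'
  refine ⟨RelIso.symm ⟨Equiv.ofBijective _ hbij, ?_⟩⟩
  intro v w
  show (cayley H T).Adj (phi K a x z v) (phi K a x z w) ↔ (GPr K).Adj v w
  rcases Nat.mod_two_eq_zero_or_one v.2.val with hv | hv <;>
  rcases Nat.mod_two_eq_zero_or_one w.2.val with hw | hw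
  · refine ⟨fun h => ?_, fun h => ?_⟩
    · exact absurd (by rw [eps0 v hv, eps0 w hw]) (cay_eps _ _ h)
    · exact absurd (by rw [hv, hw]) (GPr_par h)
  · exact key v w hv hw
  · rw [SimpleGraph.adj_comm, (GPr K).adj_comm]
    exact key w v hw hv
  · refine ⟨fun h => ?_, fun h => ?_⟩
    · exact absurd (by rw [eps1 v hv, eps1 w hw]) (cay_eps _ _ h)
    · exact absurd (by rw [hv, hw]) (GPr_par h)

end Prism

section Concrete

variable (m n ℓ : ℕ)

theorem rel_eq_one {r : FreeGroup Gen} (hr : r ∈ rels m n ℓ) :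
    (PresentedGroup.mk (rels m n ℓ) r) = 1 :=
  PresentedGroup.one_of_mem hr

theorem t_sq : gent m n ℓ * gent m n ℓ = 1 := by
  have := rel_eq_one m n ℓ (r := FreeGroup.of Gen.t ^ 2) (by simp [rels])
  rw [map_pow, pow_two] at this
  exact this

theorem x_pow : genx m n ℓ ^ (n / 2) = 1 := by
  have := rel_eq_one m n ℓ (r := FreeGroup.of Gen.x ^ (n / 2)) (by simp [rels])
  rw [map_pow] at this
  exact this

theorem y_pow : geny m n ℓ ^ m = genx m n ℓ ^ ((ℓ + m) / 2) := by
  have := rel_eq_one m n ℓ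
    (r := FreeGroup.of Gen.y ^ m * (FreeGroup.of Gen.x ^ ((ℓ + m) / 2))⁻¹) (by simp [rels])
  rw [map_mul, map_inv, map_pow, map_pow, mul_inv_eq_one] at this
  exact this

theorem t_inv : (gent m n ℓ)⁻¹ = gent m n ℓ := inv_eq_of_mul_eq_one_left (t_sq m n ℓ)

theorem tx_sq : gent m n ℓ * genx m n ℓ * (gent m n ℓ * genx m n ℓ) = 1 := by
  have := rel_eq_one m n ℓ (r := FreeGroup.of Gen.t * FreeGroup.of Gen.x *
    (FreeGroup.of Gen.t)⁻¹ * FreeGroup.of Gen.x) (by simp [rels])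
  rw [map_mul, map_mul, map_mul, map_inv] at this
  have h2 : gent m n ℓ * genx m n ℓ * (gent m n ℓ)⁻¹ * genx m n ℓ = 1 := this
  rw [t_inv] at h2
  rw [← h2]; group

theorem ty_sq : gent m n ℓ * geny m n ℓ * (gent m n ℓ * geny m n ℓ) = 1 := by
  have := rel_eq_one m n ℓ (r := FreeGroup.of Gen.t * FreeGroup.of Gen.y *
    (FreeGroup.of Gen.t)⁻¹ * FreeGroup.of Gen.y) (by simp [rels])
  rw [map_mul, map_mul, map_mul, map_inv] at this
  have h2 : gent m n ℓ * geny m n ℓ * (gent m n ℓ)⁻¹ * geny m n ℓ = 1 := this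
  rw [t_inv] at h2
  rw [← h2]; group

theorem xy_comm : Commute (genx m n ℓ) (geny m n ℓ) := by
  have := rel_eq_one m n ℓ (r := FreeGroup.of Gen.x * FreeGroup.of Gen.y *
    (FreeGroup.of Gen.x)⁻¹ * (FreeGroup.of Gen.y)⁻¹) (by simp [rels])
  rw [map_mul, map_mul, map_mul, map_inv, map_inv] at this
  have h2 : genx m n ℓ * geny m n ℓ * (genx m n ℓ)⁻¹ * (geny m n ℓ)⁻¹ = 1 := this
  rw [mul_inv_eq_one, mul_inv_eq_iff_eq_mul] at h2
  exact h2

theorem G_closure : Subgroup.closure {gent m n ℓ, gent m n ℓ * genx m n ℓ, gent m n ℓ * geny m n ℓ}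
    = ⊤ := by
  rw [eq_top_iff, ← PresentedGroup.closure_range_of, Subgroup.closure_le]
  have ht : gent m n ℓ ∈ Subgroup.closure
      {gent m n ℓ, gent m n ℓ * genx m n ℓ, gent m n ℓ * geny m n ℓ} :=
    Subgroup.subset_closure (by simp)
  rintro _ ⟨g, rfl⟩
  cases g with
  | t => exact ht
  | x =>
    have h2 : gent m n ℓ * genx m n ℓ ∈ Subgroup.closure
      {gent m n ℓ, gent m n ℓ * genx m n ℓ, gent m n ℓ * geny m n ℓ} :=
      Subgroup.subset_closure (by simp)
    exact (Subgroup.mul_mem_cancel_left _ ht).1 h2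
  | y =>
    have h2 : gent m n ℓ * geny m n ℓ ∈ Subgroup.closure
      {gent m n ℓ, gent m n ℓ * genx m n ℓ, gent m n ℓ * geny m n ℓ} :=
      Subgroup.subset_closure (by simp)
    exact (Subgroup.mul_mem_cancel_left _ ht).1 h2

/-- Images of generators under the sign map. -/
def sgnGen : Gen → ℤˣ
  | .t => -1
  | .x => 1
  | .y => 1

/-- The sign map. -/
def sgn : G m n ℓ →* ℤˣ := PresentedGroup.toGroup (f := sgnGen) (by
  intro r hr
  simp only [rels, Set.mem_insert_iff, Set.mem_singleton_iff] at hr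
  rcases hr with rfl | rfl | rfl | rfl | rfl | rfl <;> simp [sgnGen])

theorem sgn_t : sgn m n ℓ (gent m n ℓ) = -1 := PresentedGroup.toGroup.of _
theorem sgn_x : sgn m n ℓ (genx m n ℓ) = 1 := PresentedGroup.toGroup.of _
theorem sgn_y : sgn m n ℓ (geny m n ℓ) = 1 := PresentedGroup.toGroup.of _

/-- The lattice of relations between `x` and `y`. -/
def lat : AddSubgroup (ℤ × ℤ) :=
  AddSubgroup.closure {(((n / 2 : ℕ) : ℤ), 0), (-(((ℓ + m) / 2 : ℕ) : ℤ), (m : ℤ))}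

/-- Images of generators as affine permutations of the quotient lattice. -/
def permGen : Gen → Equiv.Perm ((ℤ × ℤ) ⧸ lat m n ℓ)
  | .t => Equiv.neg _
  | .x => Equiv.addLeft (QuotientAddGroup.mk ((1, 0) : ℤ × ℤ))
  | .y => Equiv.addLeft (QuotientAddGroup.mk ((0, 1) : ℤ × ℤ))

theorem pow_addLeft_apply' {Q : Type*} [AddGroup Q] (q r : Q) (k : ℕ) :
    (Equiv.addLeft q ^ k : Equiv.Perm Q) r = k • q + r := by
  induction k with
  | zero => simp
  | succ k ih => rw [pow_succ', Equiv.Perm.mul_apply, ih, succ_nsmul']; simp [add_assoc]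

theorem perm_rels : ∀ r ∈ rels m n ℓ, FreeGroup.lift (permGen m n ℓ) r = 1 := by
  have hx : (n / 2) • (QuotientAddGroup.mk ((1, 0) : ℤ × ℤ) : (ℤ × ℤ) ⧸ lat m n ℓ) = 0 := by
    rw [← QuotientAddGroup.mk_nsmul, QuotientAddGroup.eq_zero_iff]
    exact AddSubgroup.subset_closure (by simp)
  have hy : m • (QuotientAddGroup.mk ((0, 1) : ℤ × ℤ) : (ℤ × ℤ) ⧸ lat m n ℓ) =
      ((ℓ + m) / 2) • (QuotientAddGroup.mk ((1, 0) : ℤ × ℤ) : (ℤ × ℤ) ⧸ lat m n ℓ) := by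
    rw [← QuotientAddGroup.mk_nsmul, ← QuotientAddGroup.mk_nsmul, ← sub_eq_zero,
      ← QuotientAddGroup.mk_sub, QuotientAddGroup.eq_zero_iff]
    exact AddSubgroup.subset_closure (by simp)
  intro r hr
  simp only [rels, Set.mem_insert_iff, Set.mem_singleton_iff] at hr
  rcases hr with rfl | rfl | rfl | rfl | rfl | rfl
  · ext q; simp [permGen, pow_two]
  · ext q; simp only [map_pow, FreeGroup.lift_apply_of, permGen]
    rw [pow_addLeft_apply', hx]; simp
  · simp only [map_mul, map_inv, map_pow, FreeGroup.lift_apply_of, permGen]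
    rw [mul_inv_eq_one]
    ext q
    rw [pow_addLeft_apply', pow_addLeft_apply', hy]
  · have h : ∀ a b c : Equiv.Perm ((ℤ × ℤ) ⧸ lat m n ℓ), a * b = c⁻¹ * a → a * b * a⁻¹ * c = 1 := by
      intro a b c h; rw [h]; group
    simp only [map_mul, map_inv, FreeGroup.lift_apply_of]
    apply h
    rw [eq_inv_mul_iff_mul_eq]
    ext q
    simp [permGen]
  · have h : ∀ a b c : Equiv.Perm ((ℤ × ℤ) ⧸ lat m n ℓ), a * b = c⁻¹ * a → a * b * a⁻¹ * c = 1 := by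
      intro a b c h; rw [h]; group
    simp only [map_mul, map_inv, FreeGroup.lift_apply_of]
    apply h
    rw [eq_inv_mul_iff_mul_eq]
    ext q
    simp [permGen]
  · simp only [map_mul, map_inv, FreeGroup.lift_apply_of]
    rw [mul_inv_eq_one, mul_inv_eq_iff_eq_mul]
    ext q
    simp only [permGen, Equiv.Perm.mul_apply, Equiv.coe_addLeft]
    exact add_left_comm _ _ _

/-- The affine action. -/
def act : G m n ℓ →* Equiv.Perm ((ℤ × ℤ) ⧸ lat m n ℓ) :=
  PresentedGroup.toGroup (perm_rels m n ℓ)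

theorem act_yx (i j : ℕ) : act m n ℓ (geny m n ℓ ^ i * genx m n ℓ ^ j) 0 =
    QuotientAddGroup.mk ((j : ℤ), (i : ℤ)) := by
  have hx : act m n ℓ (genx m n ℓ) = permGen m n ℓ .x := PresentedGroup.toGroup.of _
  have hy : act m n ℓ (geny m n ℓ) = permGen m n ℓ .y := PresentedGroup.toGroup.of _
  rw [map_mul, map_pow, map_pow, hx, hy]
  simp only [permGen, Equiv.Perm.mul_apply, pow_addLeft_apply']
  rw [add_zero, ← QuotientAddGroup.mk_nsmul, ← QuotientAddGroup.mk_nsmul, ← QuotientAddGroup.mk_add]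
  simp

theorem yx_inj {i j i' j' : ℕ} (hi : i < m) (hi' : i' < m)
    (hj : j < n / 2) (hj' : j' < n / 2)
    (h : geny m n ℓ ^ i * genx m n ℓ ^ j = geny m n ℓ ^ i' * genx m n ℓ ^ j') :
    i = i' ∧ j = j' := by
  have h1 := act_yx m n ℓ i j
  rw [h, act_yx, QuotientAddGroup.eq, lat, AddSubgroup.mem_closure_pair] at h1
  obtain ⟨u, v, huv⟩ := h1
  rw [Prod.ext_iff] at huv
  simp only [Prod.fst_add, Prod.snd_add, Prod.smul_mk, smul_eq_mul, Prod.fst_neg, Prod.snd_neg,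
    mul_zero, zero_add] at huv
  obtain ⟨h1, h2⟩ := huv
  have aux : ∀ (p q w M : ℤ), 0 ≤ p → p < M → 0 ≤ q → q < M → w * M = -p + q → w = 0 := by
    intro p q w M hp hp' hq hq' hw
    by_contra hne
    rcases lt_or_gt_of_ne hne with h | h
    · nlinarith
    · nlinarith
  have hv : v = 0 := aux i' i v m (by omega) (by omega) (by omega) (by omega) h2
  subst hv
  have hu : u = 0 := aux j' j u (n / 2 : ℕ) (by omega) (by omega) (by omega) (by omega) (by
    linarith)
  subst hu
  omega

/-- Normal form map. -/
def nf (p : (Fin m × Fin (n / 2)) × Bool) : G m n ℓ :=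
  (if p.2 then gent m n ℓ else 1) * (geny m n ℓ ^ (p.1.1 : ℕ) * genx m n ℓ ^ (p.1.2 : ℕ))

theorem nf_inj : Function.Injective (nf m n ℓ) := by
  rintro ⟨⟨i, j⟩, e⟩ ⟨⟨i', j'⟩, e'⟩ h
  have hs := congrArg (sgn m n ℓ) h
  have he : e = e' := by
    simp only [nf, map_mul, map_pow, sgn_x, sgn_y, one_pow, mul_one] at hs
    cases e <;> cases e' <;> simp [sgn_t] at hs ⊢
  subst he
  simp only [nf] at h
  have := yx_inj m n ℓ i.2 i'.2 j.2 j'.2 (mul_left_cancel h)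
  simp [Fin.ext_iff, this]

theorem nf_surj (hm : 0 < m) (hn : 4 ≤ n) : Function.Surjective (nf m n ℓ) := by
  have xt : genx m n ℓ * gent m n ℓ = gent m n ℓ * (genx m n ℓ)⁻¹ := by
    have h := tx_sq m n ℓ
    rw [eq_mul_inv_iff_mul_eq]
    calc genx m n ℓ * gent m n ℓ * genx m n ℓ
        = gent m n ℓ * gent m n ℓ * (genx m n ℓ * gent m n ℓ * genx m n ℓ) := by
          rw [t_sq, one_mul]
      _ = gent m n ℓ * (gent m n ℓ * genx m n ℓ * (gent m n ℓ * genx m n ℓ)) := by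
          simp only [mul_assoc]
      _ = gent m n ℓ := by rw [h, mul_one]
  have yt : geny m n ℓ * gent m n ℓ = gent m n ℓ * (geny m n ℓ)⁻¹ := by
    have h := ty_sq m n ℓ
    rw [eq_mul_inv_iff_mul_eq]
    calc geny m n ℓ * gent m n ℓ * geny m n ℓ
        = gent m n ℓ * gent m n ℓ * (geny m n ℓ * gent m n ℓ * geny m n ℓ) := by
          rw [t_sq, one_mul]
      _ = gent m n ℓ * (gent m n ℓ * geny m n ℓ * (gent m n ℓ * geny m n ℓ)) := by
          simp only [mul_assoc]
      _ = gent m n ℓ := by rw [h, mul_one]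
  have xkt := conj_zpow' xt
  have ykt := conj_zpow' yt
  have hcomm := xy_comm m n ℓ
  have form : ∀ h : G m n ℓ, ∃ p q : ℤ, ∃ e : Bool,
      h = (if e then gent m n ℓ else 1) * (geny m n ℓ ^ p * genx m n ℓ ^ q) := by
    have aux : ∀ p q : ℤ, geny m n ℓ ^ p * genx m n ℓ ^ q * gent m n ℓ =
        gent m n ℓ * (geny m n ℓ ^ (-p) * genx m n ℓ ^ (-q)) := by
      intro p q
      rw [mul_assoc, xkt, ← mul_assoc, ykt, mul_assoc]
    have ht : ∀ h : G m n ℓ, (∃ p q : ℤ, ∃ e : Bool,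
      h = (if e then gent m n ℓ else 1) * (geny m n ℓ ^ p * genx m n ℓ ^ q)) →
      (∃ p q : ℤ, ∃ e : Bool,
      h * gent m n ℓ = (if e then gent m n ℓ else 1) * (geny m n ℓ ^ p * genx m n ℓ ^ q)) := by
      rintro _ ⟨p, q, e, rfl⟩
      refine ⟨-p, -q, !e, ?_⟩
      rw [mul_assoc, aux, ← mul_assoc]
      cases e <;> simp [t_sq]
    apply gen_induction (t_sq m n ℓ) (tx_sq m n ℓ) (ty_sq m n ℓ) (G_closure m n ℓ)
    · exact ⟨0, 0, false, by simp⟩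
    · exact ht
    · intro g hg
      obtain ⟨p, q, e, h⟩ := ht g hg
      refine ⟨p, q + 1, e, ?_⟩
      rw [← mul_assoc, h, zpow_add_one]; simp only [mul_assoc]
    · intro g hg
      obtain ⟨p, q, e, h⟩ := ht g hg
      refine ⟨p + 1, q, e, ?_⟩
      rw [← mul_assoc, h, zpow_add_one]; simp only [mul_assoc]
      rw [(hcomm.zpow_left q).eq]
  intro h
  obtain ⟨p, q, e, rfl⟩ := form h
  have hm0 := Int.emod_nonneg p (b := (m : ℤ)) (by omega)
  have hm1 := Int.emod_lt_of_pos p (b := (m : ℤ)) (by omega)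
  obtain ⟨d, hd⟩ : ∃ d, d = n / 2 := ⟨_, rfl⟩
  obtain ⟨s, hs⟩ : ∃ s, s = (ℓ + m) / 2 := ⟨_, rfl⟩
  obtain ⟨q', hq'⟩ : ∃ q' : ℤ, q' = s * (p / m) + q := ⟨_, rfl⟩
  have hd0 := Int.emod_nonneg q' (b := (d : ℤ)) (by omega)
  have hd1 := Int.emod_lt_of_pos q' (b := (d : ℤ)) (by omega)
  refine ⟨((⟨(p % m).toNat, by omega⟩, ⟨(q' % d).toNat, by omega⟩), e), ?_⟩
  simp only [nf]
  congr 1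
  rw [← zpow_natCast, ← zpow_natCast, Int.toNat_of_nonneg hm0, Int.toNat_of_nonneg hd0]
  have e1 : geny m n ℓ ^ p = geny m n ℓ ^ (p % m) * genx m n ℓ ^ ((s : ℤ) * (p / m)) := by
    conv_lhs => rw [← Int.emod_add_mul_ediv p m, zpow_add, zpow_mul, zpow_natCast, y_pow,
      ← zpow_natCast, ← zpow_mul, ← hs]
  have e2 : genx m n ℓ ^ q' = genx m n ℓ ^ (q' % d) := by
    conv_lhs => rw [← Int.emod_add_mul_ediv q' d, zpow_add, zpow_mul, zpow_natCast, hd, x_pow,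
      one_zpow, mul_one]
    rw [hd]
  rw [e1, ← e2, hq', zpow_add, mul_assoc]

theorem card_G (hm : 0 < m) (hn : 4 ≤ n) (hne : Even n) : Nat.card (G m n ℓ) = m * n := by
  rw [← Nat.card_congr (Equiv.ofBijective _ ⟨nf_inj m n ℓ, nf_surj m n ℓ hm hn⟩)]
  obtain ⟨k, rfl⟩ := hne
  rw [Nat.card_eq_fintype_card, Fintype.card_prod, Fintype.card_prod, Fintype.card_fin,
    Fintype.card_fin, Fintype.card_bool, mul_assoc]
  congr 1; omega

end Concrete

/-- **Proposition 5.2.** Either every automorphism of `Γ = HTG(m,n,ℓ)` fixing setwise at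
least one of the color classes `R`, `B`, `Gr` is color permuting, or `4 ∣ mn` and `Γ` is
isomorphic to the generalized prism `GPr(mn/4)`. -/
theorem statement14 (m n ℓ : ℕ) (hm : 0 < m) (hn : 4 ≤ n) (hne : Even n)
    (hl : ℓ ≤ n - 1) (hpar : ℓ % 2 = m % 2) :
    (∀ f : cayley (G m n ℓ) (S m n ℓ) ≃g cayley (G m n ℓ) (S m n ℓ),
      (∃ C ∈ colorClasses m n ℓ, Sym2.map ⇑f '' C = C) → IsColorPermuting f) ∨
    (4 ∣ m * n ∧ Nonempty (cayley (G m n ℓ) (S m n ℓ) ≃g GPr (m * n / 4))) := by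
  have ha := t_sq m n ℓ
  have hb := tx_sq m n ℓ
  have hc := ty_sq m n ℓ
  have ht := t_inv m n ℓ
  have ea := sgn_t m n ℓ
  have eb : sgn m n ℓ (gent m n ℓ * genx m n ℓ) = -1 := by rw [map_mul, sgn_t, sgn_x, mul_one]
  have ec : sgn m n ℓ (gent m n ℓ * geny m n ℓ) = -1 := by rw [map_mul, sgn_t, sgn_y, mul_one]
  have hgen := G_closure m n ℓ
  have hcard := card_G m n ℓ hm hn hne
  have habc : gent m n ℓ * (gent m n ℓ * genx m n ℓ) * (gent m n ℓ * geny m n ℓ) *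
      gent m n ℓ * (gent m n ℓ * genx m n ℓ) * (gent m n ℓ * geny m n ℓ) = 1 := by
    have e1 : gent m n ℓ * (gent m n ℓ * genx m n ℓ) = genx m n ℓ := by
      rw [← mul_assoc, ha, one_mul]
    have h2 : gent m n ℓ * genx m n ℓ * gent m n ℓ = (genx m n ℓ)⁻¹ := by
      rw [eq_inv_iff_mul_eq_one, ← hb]; group
    have h3 : gent m n ℓ * geny m n ℓ * gent m n ℓ = (geny m n ℓ)⁻¹ := by
      rw [eq_inv_iff_mul_eq_one, ← hc]; group
    rw [e1]
    calc _ = genx m n ℓ * (gent m n ℓ * geny m n ℓ * gent m n ℓ) *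
          (gent m n ℓ * genx m n ℓ * gent m n ℓ) * geny m n ℓ := by group
      _ = 1 := by
        rw [h2, h3, mul_assoc, (xy_comm m n ℓ).inv_left.eq]
        group
  have hT : S m n ℓ = {gent m n ℓ, gent m n ℓ * genx m n ℓ, gent m n ℓ * geny m n ℓ} := rfl
  have hCC : colorClasses m n ℓ = {cls (gent m n ℓ), cls (gent m n ℓ * genx m n ℓ),
    cls (gent m n ℓ * geny m n ℓ)} := rfl
  have hN : 0 < m * n := Nat.mul_pos hm (by omega)
  unfold IsColorPermuting
  rw [hCC]
  generalize hA : gent m n ℓ = a at *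
  generalize hB : a * genx m n ℓ = b at *
  generalize hC : a * geny m n ℓ = c at *
  have ne1 : ∀ g, sgn m n ℓ g = -1 → g ≠ 1 := by
    rintro g hg rfl
    rw [map_one] at hg
    exact absurd hg (by decide)
  have a1 := ne1 a ea
  have b1 := ne1 b eb
  have c1 := ne1 c ec
  have ia : a⁻¹ = a := inv_eq_of_mul_eq_one_left ha
  have ib : b⁻¹ = b := inv_eq_of_mul_eq_one_left hb
  have ic : c⁻¹ = c := inv_eq_of_mul_eq_one_left hc
  have hbca : b * c * a * b * c * a = 1 := by
    have h := congrArg (fun g => a * g * a) habc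
    simp only [mul_one, ha] at h
    rw [← h]
    calc b * c * a * b * c * a = (a * a) * b * c * a * b * c * a := by rw [ha, one_mul]
      _ = _ := by group
  have hcab : c * a * b * c * a * b = 1 := by
    have h := congrArg (fun g => b * g * b) hbca
    simp only [mul_one, hb] at h
    rw [← h]
    calc c * a * b * c * a * b = (b * b) * c * a * b * c * a * b := by rw [hb, one_mul]
      _ = _ := by group
  have s1 : ({a, b, c} : Set (G m n ℓ)) = {b, c, a} := by ext; simp; tauto
  have s2 : ({a, b, c} : Set (G m n ℓ)) = {c, a, b} := by ext; simp; tauto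
  by_cases h1 : b * c = c * b → b = c
  swap
  · push Not at h1
    exact Or.inr (prism_iso ha hb hc habc hgen (sgn m n ℓ) ea eb ec h1.1 h1.2 hN hcard hT)
  by_cases h2 : c * a = a * c → c = a
  swap
  · push Not at h2
    exact Or.inr (prism_iso hb hc ha hbca (s1 ▸ hgen) (sgn m n ℓ) eb ec ea h2.1 h2.2 hN hcard
      (hT.trans s1))
  by_cases h3 : a * b = b * a → a = b
  swap
  · push Not at h3
    exact Or.inr (prism_iso hc ha hb hcab (s2 ▸ hgen) (sgn m n ℓ) ec ea eb h3.1 h3.2 hN hcard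
      (hT.trans s2))
  left
  rintro f ⟨D, hD, hfD⟩ C hC'
  simp only [Set.mem_insert_iff, Set.mem_singleton_iff] at hD hC' ⊢
  rcases hD with rfl | rfl | rfl
  · exact perm_of_fix ha hb hc habc hgen b1 c1 h1 hT f hfD C hC'
  · have := perm_of_fix hb hc ha hbca (s1 ▸ hgen) c1 a1 h2 (hT.trans s1) f hfD C (by
      rcases hC' with h | h | h
      · exact Or.inr (Or.inr h)
      · exact Or.inl h
      · exact Or.inr (Or.inl h))
    rcases this with h | h | h
    · exact Or.inr (Or.inl h)
    · exact Or.inr (Or.inr h)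
    · exact Or.inl h
  · have := perm_of_fix hc ha hb hcab (s2 ▸ hgen) a1 b1 h3 (hT.trans s2) f hfD C (by
      rcases hC' with h | h | h
      · exact Or.inr (Or.inl h)
      · exact Or.inr (Or.inr h)
      · exact Or.inl h)
    rcases this with h | h | h
    · exact Or.inr (Or.inr h)
    · exact Or.inl h
    · exact Or.inr (Or.inl h)

end HTGPaper
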